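/- arXiv:2204.04755 — 2 statements merged into one kernel-verified Lean document; each statement's English description precedes it below -/
import Mathlib

section
/- Let F be a finite field with |F| = q. In the symplectic graph Sp(4,q), every vertex is a regular point in the elementary sense: for every vertex v and every vertex x with x ≠ v and x not adjacent to v, the span {v,x}^{⊥⊥} has exactly q+1 elements and is a coclique (no two of its elements are adjacent). -/
open scoped Classical LinearAlgebra.Projectivization

/-- The symplectic form on `F^4` given by `u₀w₁ − u₁w₀ + u₂w₃ − u₃w₂`. -/
def sympForm {F : Type} [Field F] (u w : Fin 4 → F) : F :=
  u 0 * w 1 - u 1 * w 0 + u 2 * w 3 - u 3 * w 2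

/-- The symplectic graph `Sp(4,q)`. -/
def spGraph (F : Type) [Field F] : SimpleGraph (ℙ F (Fin 4 → F)) :=
  SimpleGraph.fromRel (fun x y => sympForm x.rep y.rep = 0)

noncomputable instance (F : Type) [Field F] [Fintype F] : Fintype (ℙ F (Fin 4 → F)) :=
  have : Finite (ℙ F (Fin 4 → F)) := Quotient.finite _
  Fintype.ofFinite _

/-- For a graph `G` and a set `X` of vertices, `X^⊥` is the set of vertices `w` such that
for every `x ∈ X`, either `w = x` or `w` is adjacent to `x`. -/
def perp {V : Type*} (G : SimpleGraph V) (X : Set V) : Set V :=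
  {w | ∀ x ∈ X, w = x ∨ G.Adj w x}

/-! Two points are equal or adjacent exactly when their representatives are orthogonal, so `X^⊥` is
the set of points of the subspace orthogonal to the span of `X`. As the form is nondegenerate,
`{v, x}^⊥⊥` is then the projective line through `v` and `x`, which has `q + 1` points. A clique
spans a totally isotropic subspace, hence another clique; two adjacent points of the line `vx` span
it, so they would force `v` and `x` to be adjacent. -/

section ProjectiveSubspace

open Projectivization.Subspace (span subset_span span_le_subspace_iff)

variable {K V : Type*} [DivisionRing K] [AddCommGroup V] [Module K V]

theorem rep_mem_submodule_iff (W : Projectivization.Subspace K V) (x : ℙ K V) :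
    x.rep ∈ W.submodule ↔ x ∈ W := by
  rw [W.mem_submodule_iff x.rep_nonzero, x.mk_rep]

theorem rep_mem_iff_mem_projectivization (W : Submodule K V) (x : ℙ K V) :
    x.rep ∈ W ↔ x ∈ W.projectivization := by
  rw [← rep_mem_submodule_iff, OrderIso.apply_symm_apply]

theorem submodule_span (X : Set (ℙ K V)) :
    (span X).submodule = Submodule.span K (Projectivization.rep '' X) := by
  apply le_antisymm
  · rw [← OrderIso.le_symm_apply, span_le_subspace_iff]
    intro x hx
    exact (rep_mem_iff_mem_projectivization _ x).1 (Submodule.subset_span ⟨x, hx, rfl⟩)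
  · rw [Submodule.span_le, Set.image_subset_iff]
    exact fun x hx ↦ (rep_mem_submodule_iff _ x).2 (subset_span X hx)

theorem finrank_submodule_span_pair {x y : ℙ K V} (hxy : x ≠ y) :
    Module.finrank K (span {x, y}).submodule = 2 := by
  have hli : LinearIndependent K ![x.rep, y.rep] :=
    Projectivization.linearIndependent_pair_iff_ne.2 hxy
  rw [submodule_span, Set.image_pair, ← Matrix.range_cons_cons_empty x.rep y.rep ![],
    finrank_span_eq_card hli, Fintype.card_fin]

theorem span_pair_eq_of_finrank_submodule_eq_two {W : Projectivization.Subspace K V}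
    (hW : Module.finrank K W.submodule = 2) {x y : ℙ K V} (hx : x ∈ W) (hy : y ∈ W)
    (hxy : x ≠ y) : span {x, y} = W := by
  have : FiniteDimensional K W.submodule := .of_finrank_pos (by lia)
  have hle : span {x, y} ≤ W := span_le_subspace_iff.2 (Set.pair_subset hx hy)
  apply Projectivization.Subspace.submodule.injective
  exact Submodule.eq_of_le_of_finrank_eq (Projectivization.Subspace.submodule.monotone hle)
    ((finrank_submodule_span_pair hxy).trans hW.symm)

theorem range_projectivization_map {U : Type*} [AddCommGroup U] [Module K U] (f : U →ₗ[K] V)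
    (hf : Function.Injective f) :
    Set.range (Projectivization.map f hf) = (LinearMap.range f).projectivization := by
  ext x
  induction x using Projectivization.ind with | h w hw => ?_
  rw [SetLike.mem_coe, Submodule.mk_mem_projectivization_iff]
  constructor
  · rintro ⟨p, hp⟩
    induction p using Projectivization.ind with | h u hu => ?_
    obtain ⟨a, ha⟩ := (Projectivization.mk_eq_mk_iff' K _ _ hw _).1 hp.symm
    exact ⟨a • u, by rw [map_smul, ha]⟩
  · rintro ⟨u, rfl⟩
    exact ⟨.mk K u (ne_of_apply_ne f (by rwa [map_zero])), rfl⟩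

theorem encard_eq_card_add_one_of_finrank_submodule_eq_two {W : Projectivization.Subspace K V}
    (hW : Module.finrank K W.submodule = 2) :
    (W : Set (ℙ K V)).encard = ENat.card K + 1 := by
  have : FiniteDimensional K W.submodule := .of_finrank_pos (by lia)
  let e : (Fin 2 → K) ≃ₗ[K] W.submodule := .ofFinrankEq _ _ (by rw [Module.finrank_fin_fun, hW])
  let f : (Fin 2 → K) →ₗ[K] V := W.submodule.subtype ∘ₗ e
  have hf : Function.Injective f := W.submodule.injective_subtype.comp e.injective
  have hrange : LinearMap.range f = W.submodule := by
    rw [LinearMap.range_comp_of_range_eq_top _ e.range, Submodule.range_subtype]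
  calc
    (W : Set (ℙ K V)).encard = (Set.range (Projectivization.map f hf)).encard := by
      rw [range_projectivization_map, hrange, OrderIso.symm_apply_apply]
    _ = ENat.card (ℙ K (Fin 2 → K)) :=
      ENat.card_congr (Equiv.ofInjective _ (Projectivization.map_injective f hf)).symm
    _ = ENat.card (OnePoint K) := ENat.card_congr (OnePoint.equivProjectivization K).symm
    _ = ENat.card K + 1 := by simp [ENat.card, OnePoint]

end ProjectiveSubspace

theorem isClique_iff_subset_perp {V : Type*} {G : SimpleGraph V} {X : Set V} :
    G.IsClique X ↔ X ⊆ perp G X := by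
  simp only [SimpleGraph.isClique_iff, Set.Pairwise, Set.subset_def, perp, Set.mem_ofPred_eq,
    or_iff_not_imp_left, ne_eq]

section OrthogonalityGraph

open Projectivization.Subspace (span subset_span span_coe span_le_subspace_iff)

variable {K V : Type*} [Field K] [AddCommGroup V] [Module K V] {B : LinearMap.BilinForm K V}

theorem orthogonal_orthogonal_of_finiteDimensional (hB : B.Nondegenerate) (hrefl : B.IsRefl)
    (W : Submodule K V) [FiniteDimensional K W] : B.orthogonal (B.orthogonal W) = W := by
  apply le_antisymm _ (LinearMap.BilinForm.le_orthogonal_orthogonal hrefl)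
  intro u hu
  have hBu : B u ∈ (W.map B).dualCoannihilator.dualAnnihilator := by
    rw [Submodule.mem_dualAnnihilator]
    intro w hw
    exact hrefl w u (hu w fun n hn ↦ (Submodule.mem_dualCoannihilator w).1 hw _ ⟨n, hn, rfl⟩)
  rw [Subspace.dualCoannihilator_dualAnnihilator_eq] at hBu
  obtain ⟨w, hw, hwu⟩ := hBu
  have hinj : Function.Injective B :=
    LinearMap.ker_eq_bot.1 (LinearMap.separatingLeft_iff_ker_eq_bot.1 hB.1)
  rwa [← hinj hwu]

/-- The graph on the points of a projective space in which distinct points are adjacent when they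
are orthogonal with respect to a bilinear form (in either order); for a nondegenerate alternating
form, this is the collinearity graph of the symplectic polar space. -/
def orthogonalityGraph (B : LinearMap.BilinForm K V) : SimpleGraph (ℙ K V) :=
  SimpleGraph.fromRel fun x y ↦ B x.rep y.rep = 0

namespace orthogonalityGraph

theorem eq_or_adj_iff (hB : B.IsAlt) {x y : ℙ K V} :
    x = y ∨ (orthogonalityGraph B).Adj x y ↔ B x.rep y.rep = 0 := by
  rw [orthogonalityGraph, SimpleGraph.fromRel_adj, hB.eq_iff (x := y.rep), or_self]
  have : x = y → B x.rep y.rep = 0 := by rintro rfl; exact hB x.rep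
  tauto

theorem perp_eq_orthogonal_span (hB : B.IsAlt) (X : Set (ℙ K V)) :
    perp (orthogonalityGraph B) X = (B.orthogonal (span X).submodule).projectivization := by
  ext w
  calc
    w ∈ perp (orthogonalityGraph B) X ↔ ∀ x ∈ X, B x.rep w.rep = 0 := by
      simp only [perp, Set.mem_ofPred_eq, eq_or_adj_iff hB, hB.eq_iff (x := w.rep)]
    _ ↔ X ⊆ (LinearMap.ker (B.flip w.rep)).projectivization := by
      simp only [Set.subset_def, SetLike.mem_coe, ← rep_mem_iff_mem_projectivization,
        LinearMap.mem_ker, LinearMap.BilinForm.flip_apply]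
    _ ↔ (span X).submodule ≤ LinearMap.ker (B.flip w.rep) := by
      rw [← span_le_subspace_iff, OrderIso.le_symm_apply]
    _ ↔ w.rep ∈ B.orthogonal (span X).submodule := Iff.rfl
    _ ↔ w ∈ (B.orthogonal (span X).submodule).projectivization :=
      rep_mem_iff_mem_projectivization _ w

theorem perp_perp_eq_span (hB : B.IsAlt) (hnd : B.Nondegenerate) (X : Set (ℙ K V))
    [FiniteDimensional K (span X).submodule] :
    perp (orthogonalityGraph B) (perp (orthogonalityGraph B) X) = span X := by
  rw [perp_eq_orthogonal_span hB X, perp_eq_orthogonal_span hB, span_coe,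
    OrderIso.apply_symm_apply, orthogonal_orthogonal_of_finiteDimensional hnd hB.isRefl,
    OrderIso.symm_apply_apply]

theorem isClique_span (hB : B.IsAlt) {X : Set (ℙ K V)} (hX : (orthogonalityGraph B).IsClique X) :
    (orthogonalityGraph B).IsClique (span X : Set (ℙ K V)) := by
  rw [isClique_iff_subset_perp, perp_eq_orthogonal_span hB] at hX ⊢
  rw [span_coe]
  exact span_le_subspace_iff.2 hX

theorem not_adj_of_mem_span_pair (hB : B.IsAlt) {v x y z : ℙ K V} (hxv : x ≠ v)
    (hadj : ¬ (orthogonalityGraph B).Adj v x) (hy : y ∈ span {v, x}) (hz : z ∈ span {v, x}) :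
    ¬ (orthogonalityGraph B).Adj y z := by
  intro hyz
  have hline : span {y, z} = span {v, x} :=
    span_pair_eq_of_finrank_submodule_eq_two (finrank_submodule_span_pair hxv.symm) hy hz hyz.ne
  have hclique : (orthogonalityGraph B).IsClique (span {v, x} : Set (ℙ K V)) :=
    hline ▸ isClique_span hB (SimpleGraph.isClique_pair.2 fun _ ↦ hyz)
  exact hadj (hclique (subset_span _ (Set.mem_insert v {x}))
    (subset_span _ (Set.mem_insert_of_mem v rfl)) hxv.symm)

end orthogonalityGraph

theorem spGraph_every_vertex_regular_general (hB : B.IsAlt) (hnd : B.Nondegenerate)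
    (v x : ℙ K V) (hxv : x ≠ v) (hadj : ¬ (orthogonalityGraph B).Adj v x) :
    (perp (orthogonalityGraph B) (perp (orthogonalityGraph B) {v, x})).encard =
      ENat.card K + 1 ∧
    ∀ y ∈ perp (orthogonalityGraph B) (perp (orthogonalityGraph B) {v, x}),
      ∀ z ∈ perp (orthogonalityGraph B) (perp (orthogonalityGraph B) {v, x}),
        ¬ (orthogonalityGraph B).Adj y z := by
  have hrank : Module.finrank K (span {v, x}).submodule = 2 :=
    finrank_submodule_span_pair hxv.symm
  have : FiniteDimensional K (span {v, x}).submodule := .of_finrank_pos (by lia)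
  rw [orthogonalityGraph.perp_perp_eq_span hB hnd]
  exact ⟨encard_eq_card_add_one_of_finrank_submodule_eq_two hrank, fun _ hy _ hz ↦
    orthogonalityGraph.not_adj_of_mem_span_pair hB hxv hadj hy hz⟩

end OrthogonalityGraph

section SympForm

variable (F : Type) [Field F]

/-- `sympForm` as a bilinear form, which identifies `spGraph F` with an orthogonality graph. -/
def sympBilinForm : LinearMap.BilinForm F (Fin 4 → F) :=
  LinearMap.mk₂ F sympForm
    (fun u u' w ↦ by simp only [sympForm, Pi.add_apply]; ring)
    (fun a u w ↦ by simp only [sympForm, Pi.smul_apply, smul_eq_mul]; ring)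
    (fun u w w' ↦ by simp only [sympForm, Pi.add_apply]; ring)
    (fun a u w ↦ by simp only [sympForm, Pi.smul_apply, smul_eq_mul]; ring)

namespace sympBilinForm

theorem isAlt : (sympBilinForm F).IsAlt := fun u ↦ by
  simp only [sympBilinForm, LinearMap.mk₂_apply, sympForm]
  ring

theorem nondegenerate : (sympBilinForm F).Nondegenerate := by
  refine (isAlt F).isRefl.nondegenerate_iff_separatingLeft.2 fun u hu ↦ ?_
  have hcoord (i : Fin 4) : sympForm u (Pi.single i 1) = 0 := hu (Pi.single i 1)
  ext i
  fin_cases i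
  · simpa [sympForm] using hcoord 1
  · simpa [sympForm] using hcoord 0
  · simpa [sympForm] using hcoord 3
  · simpa [sympForm] using hcoord 2

end sympBilinForm

theorem spGraph_eq_orthogonalityGraph : spGraph F = orthogonalityGraph (sympBilinForm F) :=
  rfl

end SympForm

/-- in `Sp(4,q)` every vertex `v` is a regular point in the elementary sense:
for every vertex `x ≠ v` not adjacent to `v`, the span `{v,x}^{⊥⊥}` has exactly `q + 1`
elements and is a coclique. -/
theorem spGraph_every_vertex_regular (F : Type) [Field F] [Fintype F] (q : ℕ)
    (hq : Fintype.card F = q) (v x : ℙ F (Fin 4 → F)) (hxv : x ≠ v)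
    (hadj : ¬ (spGraph F).Adj v x) :
    (perp (spGraph F) (perp (spGraph F) {v, x})).ncard = q + 1 ∧
    ∀ y ∈ perp (spGraph F) (perp (spGraph F) {v, x}),
      ∀ z ∈ perp (spGraph F) (perp (spGraph F) {v, x}), ¬ (spGraph F).Adj y z := by
  rw [spGraph_eq_orthogonalityGraph] at hadj ⊢
  obtain ⟨hcard, hcoclique⟩ := spGraph_every_vertex_regular_general (sympBilinForm.isAlt F)
    (sympBilinForm.nondegenerate F) v x hxv hadj
  exact ⟨by rw [Set.ncard, hcard, ENat.card_eq_coe_fintype_card, hq]; rfl, hcoclique⟩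
end

section
/- Let s ≥ t ≥ 2, let Γ be a strongly regular graph with parameters ((s+1)(st+1), s(t+1), s−1, t+1), and let v be a regular point of Γ. Then any two adjacent vertices x, y that are both distinct from v and not adjacent to v have exactly one common neighbour in N(v); equivalently, x and y have exactly s−2 common neighbours among the vertices distinct from v and not adjacent to v. -/
open scoped Classical

/-- A vertex `v` of a strongly regular graph with parameters
`((s+1)(st+1), s(t+1), s−1, t+1)` is a regular point if (i) the subgraph induced on `N(v)`
is a disjoint union of cliques, and (ii) for every vertex `x ≠ v` not adjacent to `v`, the
span `{v,x}^{⊥⊥}` has exactly `t + 1` elements and is a coclique. -/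
def IsRegularPoint {V : Type*} (G : SimpleGraph V) (t : ℕ) (v : V) : Prop :=
  Equivalence (fun x y : G.neighborSet v => x = y ∨ G.Adj ↑x ↑y) ∧
  ∀ x : V, x ≠ v → ¬ G.Adj v x →
    (perp G (perp G {v, x})).ncard = t + 1 ∧
    ∀ y ∈ perp G (perp G {v, x}), ∀ z ∈ perp G (perp G {v, x}), ¬ G.Adj y z

/-! If `v` and `x` are distinct and non-adjacent, then `M = N(v) ∩ N(x)` is a coclique: two
adjacent vertices `z, w ∈ N(v)` lie in one clique `C` of `N(v)`, and `(C ∪ {v}) \ {z, w}` already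
accounts for all `s - 1` common neighbours of `z` and `w`, so `x` is not one of them. Hence for
distinct `z, w ∈ M` the span of `v, x`, which is contained in `N(z) ∩ N(w)` and has the same size
`t + 1`, equals it. A neighbour `y` of `x` adjacent to both `z` and `w` would thus lie in the
span, a coclique containing `x`; so `y` has at most one neighbour in `M`. Double counting the
edges between `M` and the `(s - 1)(t + 1)` vertices of `N(x) \ N(v)`, where each vertex of `M` has
`s - 1` neighbours, forces exactly one. -/

theorem card_bipartiteAbove_eq_of_le {α β : Type*} {A : Finset α} {B : Finset β}
    {r : α → β → Prop} [∀ a b, Decidable (r a b)] {m n : ℕ}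
    (hle : ∀ a ∈ A, (B.bipartiteAbove r a).card ≤ m)
    (hn : ∀ b ∈ B, (A.bipartiteBelow r b).card = n) (hcard : A.card * m = B.card * n) :
    ∀ a ∈ A, (B.bipartiteAbove r a).card = m := by
  apply (Finset.sum_eq_sum_iff_of_le hle).1
  rw [Finset.sum_card_bipartiteAbove_eq_sum_card_bipartiteBelow, Finset.sum_congr rfl hn]
  simpa using hcard.symm

section

variable {V : Type*} {G : SimpleGraph V} {t : ℕ} {v x y z w : V}

theorem commonNeighbors_subset_perp_pair : G.commonNeighbors v x ⊆ perp G {v, x} := by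
  rintro u ⟨hvu, hxu⟩ p (rfl | rfl)
  · exact Or.inr hvu.symm
  · exact Or.inr hxu.symm

theorem subset_perp_perp (X : Set V) : X ⊆ perp G (perp G X) :=
  fun _ hx _ hm => (hm _ hx).imp Eq.symm SimpleGraph.Adj.symm

theorem perp_perp_subset_neighborSet {X : Set V} (hX : G.IsIndepSet (perp G (perp G X)))
    (hx : x ∈ X) (hz : z ∈ perp G X) (hxz : G.Adj x z) :
    perp G (perp G X) ⊆ G.neighborSet z := by
  intro u hu
  rcases hu z hz with rfl | huz
  · exact absurd hxz (hX (subset_perp_perp X hx) hu hxz.ne)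
  · exact huz.symm

/-- A regular pair of vertices in a graph with the parameters of a generalized quadrangle of order
`(s, t)`: the condition that a regular point `v` imposes on each pair `v, x` of distinct
non-adjacent vertices. -/
def IsRegularPair (G : SimpleGraph V) (t : ℕ) (v x : V) : Prop :=
  (perp G (perp G {v, x})).ncard = t + 1 ∧ G.IsIndepSet (perp G (perp G {v, x}))

theorem IsRegularPoint.isRegularPair (hv : IsRegularPoint G t v) (hvx : v ≠ x)
    (hnadj : ¬ G.Adj v x) : IsRegularPair G t v x :=
  have ⟨hcard, hindep⟩ := hv.2 x hvx.symm hnadj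
  ⟨hcard, fun y hy z hz _ => hindep y hy z hz⟩

namespace IsRegularPair

theorem perp_perp_eq_commonNeighbors (h : IsRegularPair G t v x)
    (hz : z ∈ G.commonNeighbors v x) (hw : w ∈ G.commonNeighbors v x)
    (hzw : (G.commonNeighbors z w).ncard = t + 1) :
    perp G (perp G {v, x}) = G.commonNeighbors z w := by
  have hsub {u : V} (hu : u ∈ G.commonNeighbors v x) :
      perp G (perp G {v, x}) ⊆ G.neighborSet u :=
    perp_perp_subset_neighborSet h.2 (Set.mem_insert v _) (commonNeighbors_subset_perp_pair hu) hu.1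
  exact Set.eq_of_subset_of_ncard_le (Set.subset_inter (hsub hz) (hsub hw)) (hzw.trans h.1.symm).le
    (Set.finite_of_ncard_pos (hzw ▸ t.succ_pos))

theorem subsingleton_commonNeighbors_inter_neighborSet (h : IsRegularPair G t v x)
    (hindep : G.IsIndepSet (G.commonNeighbors v x))
    (hμ : ∀ ⦃a b⦄, a ≠ b → ¬ G.Adj a b → (G.commonNeighbors a b).ncard = t + 1)
    (hxy : G.Adj x y) : (G.commonNeighbors v x ∩ G.neighborSet y).Subsingleton := by
  rintro z ⟨hz, hyz⟩ w ⟨hw, hyw⟩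
  by_contra hzw
  have hspan := h.perp_perp_eq_commonNeighbors hz hw (hμ hzw (hindep hz hw hzw))
  have hy : y ∈ perp G (perp G {v, x}) := hspan ▸ ⟨hyz.symm, hyw.symm⟩
  have hx : x ∈ perp G (perp G {v, x}) := subset_perp_perp _ (by simp)
  exact h.2 hx hy hxy.ne hxy

end IsRegularPair

theorem commonNeighbors_eq_insert_sdiff [Finite V]
    (hv : Equivalence fun a b : G.neighborSet v => a = b ∨ G.Adj ↑a ↑b)
    (hz : G.Adj v z) (hw : G.Adj v w) (hzw : G.Adj z w)
    (hcard : (G.commonNeighbors z w).ncard = (G.commonNeighbors v z).ncard) :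
    G.commonNeighbors z w = insert v (G.commonNeighbors v z \ {w}) := by
  symm
  apply Set.eq_of_subset_of_ncard_le
  · rintro u (rfl | ⟨⟨hvu, hzu⟩, huw⟩)
    · exact ⟨hz.symm, hw.symm⟩
    · exact ⟨hzu, (hv.trans (x := ⟨w, hw⟩) (y := ⟨z, hz⟩) (z := ⟨u, hvu⟩)
        (Or.inr hzw.symm) (Or.inr hzu)).resolve_left fun h => huw (congrArg Subtype.val h).symm⟩
  · rw [Set.ncard_exchange (G.notMem_commonNeighbors_left v z) ⟨hw, hzw⟩, hcard]
  · exact Set.toFinite _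

theorem isIndepSet_commonNeighbors [Finite V] {ℓ : ℕ}
    (hℓ : ∀ ⦃a b⦄, G.Adj a b → (G.commonNeighbors a b).ncard = ℓ)
    (hv : Equivalence fun a b : G.neighborSet v => a = b ∨ G.Adj ↑a ↑b)
    (hvx : v ≠ x) (hnadj : ¬ G.Adj v x) : G.IsIndepSet (G.commonNeighbors v x) := by
  rintro z ⟨hvz, hxz⟩ w ⟨hvw, hxw⟩ - hzw
  have hx : x ∈ G.commonNeighbors z w := ⟨hxz.symm, hxw.symm⟩
  rw [commonNeighbors_eq_insert_sdiff hv hvz hvw hzw ((hℓ hzw).trans (hℓ hvz).symm)] at hx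
  rcases hx with rfl | ⟨⟨hvx', -⟩, -⟩
  · exact hvx rfl
  · exact hnadj hvx'

theorem commonNeighbors_sdiff_neighborSet (hindep : G.IsIndepSet (G.commonNeighbors v x))
    (hz : z ∈ G.commonNeighbors v x) :
    G.commonNeighbors x z \ G.neighborSet v = G.commonNeighbors x z :=
  sdiff_eq_left.2 <| Set.disjoint_left.2 fun _ hu hvu =>
    hindep hz ⟨hvu, hu.1⟩ hu.2.ne hu.2

theorem ncard_commonNeighbors_inter_neighborSet_eq_one [Finite V] {ℓ : ℕ}
    (hindep : G.IsIndepSet (G.commonNeighbors v x))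
    (hℓ : ∀ ⦃z⦄, G.Adj x z → (G.commonNeighbors x z).ncard = ℓ)
    (hcard : (G.neighborSet x \ G.neighborSet v).ncard = (G.commonNeighbors v x).ncard * ℓ)
    (hle : ∀ ⦃y⦄, G.Adj x y → (G.commonNeighbors v x ∩ G.neighborSet y).Subsingleton)
    (hxy : G.Adj x y) (hvy : ¬ G.Adj v y) :
    (G.commonNeighbors v x ∩ G.neighborSet y).ncard = 1 := by
  have := Fintype.ofFinite V
  let A := (G.neighborSet x \ G.neighborSet v).toFinset
  let B := (G.commonNeighbors v x).toFinset
  have habove (y : V) : (B.bipartiteAbove G.Adj y).card =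
      (G.commonNeighbors v x ∩ G.neighborSet y).ncard := by
    rw [← Set.ncard_coe_finset]
    congr 1
    ext u
    simp [B]
  have hbelow (z : V) : (A.bipartiteBelow G.Adj z).card =
      (G.commonNeighbors x z \ G.neighborSet v).ncard := by
    rw [← Set.ncard_coe_finset]
    congr 1
    ext u
    simp [A, SimpleGraph.mem_commonNeighbors, G.adj_comm u, and_right_comm]
  rw [← habove]
  refine card_bipartiteAbove_eq_of_le (A := A) (n := ℓ) (fun a ha => ?_) (fun z hz => ?_) ?_ y ?_
  · rw [habove, Set.ncard_le_one_iff_subsingleton]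
    exact hle (Set.mem_toFinset.1 ha).1
  · have hz' : z ∈ G.commonNeighbors v x := Set.mem_toFinset.1 hz
    rw [hbelow, commonNeighbors_sdiff_neighborSet hindep hz', hℓ hz'.2]
  · simpa [A, B, Set.ncard_eq_toFinset_card'] using hcard
  · simpa [A] using ⟨hxy, hvy⟩

section StronglyRegular

variable [Fintype V] [DecidableRel G.Adj] {n k ℓ μ : ℕ}

theorem ncard_commonNeighbors_of_adj (hG : G.IsSRGWith n k ℓ μ) (h : G.Adj v w) :
    (G.commonNeighbors v w).ncard = ℓ := by
  rw [← hG.of_adj v w h, Set.fintypeCard_eq_ncard]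

theorem ncard_commonNeighbors_of_not_adj (hG : G.IsSRGWith n k ℓ μ) (hvw : v ≠ w)
    (h : ¬ G.Adj v w) : (G.commonNeighbors v w).ncard = μ := by
  rw [← hG.of_not_adj hvw h, Set.fintypeCard_eq_ncard]

theorem ncard_neighborSet_sdiff_neighborSet (hG : G.IsSRGWith n k ℓ μ) (hvx : v ≠ x)
    (hnadj : ¬ G.Adj v x) : (G.neighborSet x \ G.neighborSet v).ncard = k - μ := by
  apply Nat.eq_sub_of_add_eq'
  rw [← ncard_commonNeighbors_of_not_adj hG hvx hnadj, G.commonNeighbors_symm,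
    G.commonNeighbors_eq, Set.ncard_inter_add_ncard_sdiff_eq_ncard, ← hG.regular x,
    ← G.card_neighborSet_eq_degree, Set.fintypeCard_eq_ncard]

end StronglyRegular

theorem ncard_inter_neighborSet_add_ncard_inter_not_adj {S : Set V} (hS : S.Finite)
    (hv : v ∉ S) :
    (S ∩ G.neighborSet v).ncard + (S ∩ {z | z ≠ v ∧ ¬ G.Adj v z}).ncard = S.ncard := by
  have hdiff : S ∩ {z | z ≠ v ∧ ¬ G.Adj v z} = S \ G.neighborSet v := by
    ext z
    exact and_congr_right fun hz => and_iff_right (ne_of_mem_of_not_mem hz hv)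
  rw [hdiff, Set.ncard_inter_add_ncard_sdiff_eq_ncard S _ hS]

end

theorem adjacent_in_second_subconstituent_common_neighbors_general {V : Type*} [Fintype V]
    {n s t : ℕ} {G : SimpleGraph V} [DecidableRel G.Adj]
    (hG : G.IsSRGWith n (s * (t + 1)) (s - 1) (t + 1)) {v x y : V}
    (hv : Equivalence fun a b : G.neighborSet v => a = b ∨ G.Adj ↑a ↑b)
    (hreg : IsRegularPair G t v x) (hvx : v ≠ x) (hxa : ¬ G.Adj v x) (hya : ¬ G.Adj v y)
    (hxy : G.Adj x y) :
    (G.neighborSet x ∩ G.neighborSet y ∩ G.neighborSet v).ncard = 1 ∧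
    (G.neighborSet x ∩ G.neighborSet y ∩ {z : V | z ≠ v ∧ ¬ G.Adj v z}).ncard = s - 2 := by
  have hℓ ⦃a b : V⦄ (h : G.Adj a b) := ncard_commonNeighbors_of_adj hG h
  have hμ ⦃a b : V⦄ (hab : a ≠ b) (h : ¬ G.Adj a b) := ncard_commonNeighbors_of_not_adj hG hab h
  have hindep : G.IsIndepSet (G.commonNeighbors v x) := isIndepSet_commonNeighbors hℓ hv hvx hxa
  have hcard : (G.neighborSet x \ G.neighborSet v).ncard =
      (G.commonNeighbors v x).ncard * (s - 1) := by
    rw [ncard_neighborSet_sdiff_neighborSet hG hvx hxa, hμ hvx hxa, mul_comm, Nat.mul_sub_one]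
  have hone : (G.neighborSet x ∩ G.neighborSet y ∩ G.neighborSet v).ncard = 1 := by
    rw [Set.inter_comm, ← Set.inter_assoc]
    exact ncard_commonNeighbors_inter_neighborSet_eq_one hindep (fun _ => @hℓ x _) hcard
      (fun _ => hreg.subsingleton_commonNeighbors_inter_neighborSet hindep hμ) hxy hya
  have hv_notMem : v ∉ G.neighborSet x ∩ G.neighborSet y := fun h => hxa h.1.symm
  have hsplit := ncard_inter_neighborSet_add_ncard_inter_not_adj (G := G) (Set.toFinite _) hv_notMem
  have htotal : (G.neighborSet x ∩ G.neighborSet y).ncard = s - 1 := hℓ hxy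
  exact ⟨hone, by omega⟩

/-- Let `s ≥ t ≥ 2`, `Γ` strongly regular with parameters
`((s+1)(st+1), s(t+1), s−1, t+1)` and `v` a regular point. Any two adjacent vertices
`x, y`, both distinct from `v` and not adjacent to `v`, have exactly one common neighbour
in `N(v)`; equivalently, exactly `s − 2` common neighbours among the vertices distinct
from `v` and not adjacent to `v`. -/
theorem adjacent_in_second_subconstituent_common_neighbors {V : Type} [Fintype V]
    (s t : ℕ) (hts : t ≤ s) (ht : 2 ≤ t) (G : SimpleGraph V)
    (hG : G.IsSRGWith ((s + 1) * (s * t + 1)) (s * (t + 1)) (s - 1) (t + 1))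
    (v : V) (hreg : IsRegularPoint G t v)
    (x y : V) (hxv : x ≠ v) (hyv : y ≠ v) (hxa : ¬ G.Adj v x) (hya : ¬ G.Adj v y)
    (hxy : G.Adj x y) :
    (G.neighborSet x ∩ G.neighborSet y ∩ G.neighborSet v).ncard = 1 ∧
    (G.neighborSet x ∩ G.neighborSet y ∩ {z : V | z ≠ v ∧ ¬ G.Adj v z}).ncard = s - 2 :=
  adjacent_in_second_subconstituent_common_neighbors_general hG hreg.1
    (hreg.isRegularPair hxv.symm hxa) hxv.symm hxa hya hxy
end
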